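/- For ξ ∈ ℚ_p^× and a function f : p^ℤ → ℂ such that f(|x|_p)χ(ξx) is integrable, ∫_{ℚ_p} f(|x|_p)χ(ξx) dx = (1 - 1/p)(1/|ξ|_p) ∑_{ν≥0} p^{-ν} f(1/(p^ν |ξ|_p)) - (1/|ξ|_p) f(p/|ξ|_p). -/

import Mathlib

open MeasureTheory Classical

/-- The p-adic fractional part of `x`. -/
noncomputable def padicFract (p : ℕ) [Fact p.Prime] (x : ℚ_[p]) : ℚ :=
  if h : ∃ r : ℚ, 0 ≤ r ∧ r < 1 ∧ (∃ k : ℕ, ∃ m : ℤ, r * (p : ℚ) ^ k = (m : ℚ)) ∧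
      ‖x - (r : ℚ_[p])‖ ≤ 1 then h.choose else 0

/-- The standard additive character `χ(x) = exp(2πi[x])` of `ℚ_p`. -/
noncomputable def stdChar (p : ℕ) [Fact p.Prime] (x : ℚ_[p]) : ℂ :=
  Complex.exp (2 * Real.pi * Complex.I * (padicFract p x : ℂ))

theorem padicFract_exists (p : ℕ) [hp : Fact p.Prime] (x : ℚ_[p]) :
    ∃ r : ℚ, 0 ≤ r ∧ r < 1 ∧ (∃ k : ℕ, ∃ m : ℤ, r * (p : ℚ) ^ k = (m : ℚ)) ∧
      ‖x - (r : ℚ_[p])‖ ≤ 1 := by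
  have hp1 : (1 : ℝ) < p := by exact_mod_cast hp.out.one_lt
  have hp0 : (0 : ℚ) < p := by exact_mod_cast hp.out.pos
  have hp0' : (p : ℚ_[p]) ≠ 0 := by exact_mod_cast hp.out.ne_zero
  obtain ⟨k, hk⟩ := pow_unbounded_of_one_lt ‖x‖ hp1
  have hpk : (0 : ℝ) < (p : ℝ) ^ k := by positivity
  have hx : ‖(p : ℚ_[p]) ^ k * x‖ ≤ 1 := by
    rw [norm_mul, Padic.norm_p_pow, zpow_neg, zpow_natCast, inv_mul_le_iff₀ hpk]
    linarith
  let z : ℤ_[p] := ⟨(p : ℚ_[p]) ^ k * x, hx⟩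
  have h1 := (PadicInt.norm_le_pow_iff_mem_span_pow (z - (z.appr k : ℤ_[p])) k).mpr (z.appr_spec k)
  have h2 := z.appr_lt k
  refine ⟨(z.appr k : ℚ) / (p : ℚ) ^ k, by positivity, ?_, ⟨k, z.appr k, ?_⟩, ?_⟩
  · rw [div_lt_one (by positivity)]
    exact_mod_cast h2
  · field_simp
    simp
  · have h3 : ‖(p : ℚ_[p]) ^ k * x - (z.appr k : ℚ_[p])‖ ≤ (p : ℝ) ^ (-k : ℤ) := by
      have : ‖((z - (z.appr k : ℤ_[p]) : ℤ_[p]) : ℚ_[p])‖ ≤ (p : ℝ) ^ (-k : ℤ) := h1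
      rwa [PadicInt.coe_sub, PadicInt.coe_natCast] at this
    have h4 : x - (((z.appr k : ℚ) / (p : ℚ) ^ k : ℚ) : ℚ_[p])
        = ((p : ℚ_[p]) ^ k * x - (z.appr k : ℚ_[p])) * ((p : ℚ_[p]) ^ k)⁻¹ := by
      push_cast
      field_simp
    rw [h4, norm_mul, norm_inv, Padic.norm_p_pow, ← div_eq_mul_inv]
    exact div_le_one_of_le₀ h3 (by positivity)

theorem padic_int_of_norm_le (p : ℕ) [hp : Fact p.Prime] (r : ℚ) (k : ℕ) (m : ℤ)
    (h : r * (p : ℚ) ^ k = m) (hr : ‖(r : ℚ_[p])‖ ≤ 1) : ∃ n : ℤ, r = n := by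
  have hp0 : (p : ℚ) ≠ 0 := by exact_mod_cast hp.out.ne_zero
  have h1 : (r : ℚ_[p]) * (p : ℚ_[p]) ^ k = m := by exact_mod_cast congrArg (Rat.cast : ℚ → ℚ_[p]) h
  have h2 : ‖(m : ℚ_[p])‖ ≤ (p : ℝ) ^ (-k : ℤ) := by
    rw [← h1, norm_mul, Padic.norm_p_pow]
    exact mul_le_of_le_one_left (by positivity) hr
  rw [Padic.norm_int_le_pow_iff_dvd] at h2
  obtain ⟨n, rfl⟩ := h2
  refine ⟨n, ?_⟩
  push_cast at h
  have : (p : ℚ) ^ k ≠ 0 := pow_ne_zero _ hp0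
  apply mul_right_cancel₀ this
  rw [h, mul_comm]

theorem stdChar_eq (p : ℕ) [hp : Fact p.Prime] (x : ℚ_[p]) (r : ℚ) (k : ℕ) (m : ℤ)
    (h : r * (p : ℚ) ^ k = m) (hr : ‖x - (r : ℚ_[p])‖ ≤ 1) :
    stdChar p x = Complex.exp (2 * Real.pi * Complex.I * (r : ℂ)) := by
  have hex := padicFract_exists p x
  have hs : padicFract p x = hex.choose := by
    unfold padicFract
    rw [dif_pos hex]
  obtain ⟨-, -, ⟨k', m', h'⟩, hr'⟩ := hex.choose_spec
  rw [← hs] at h' hr'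
  obtain ⟨n, hn⟩ := padic_int_of_norm_le p (padicFract p x - r) (k + k') (m' * p ^ k - m * p ^ k')
    (by push_cast; rw [← h, ← h']; ring) (by
      have : ((padicFract p x - r : ℚ) : ℚ_[p]) = (x - r) - (x - padicFract p x) := by
        push_cast; ring
      rw [this, sub_eq_add_neg (x - (r : ℚ_[p]))]
      refine (Padic.nonarchimedean _ _).trans (max_le hr ?_)
      rwa [norm_neg])
  unfold stdChar
  rw [Complex.exp_eq_exp_iff_exists_int]
  refine ⟨n, ?_⟩
  have : (padicFract p x : ℂ) = r + n := by
    have : padicFract p x = r + n := by linarith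
    rw [this]; push_cast; ring
  rw [this]; ring

theorem stdChar_add (p : ℕ) [hp : Fact p.Prime] (x y : ℚ_[p]) :
    stdChar p (x + y) = stdChar p x * stdChar p y := by
  obtain ⟨r, -, -, ⟨k, m, h⟩, hr⟩ := padicFract_exists p x
  obtain ⟨r', -, -, ⟨k', m', h'⟩, hr'⟩ := padicFract_exists p y
  rw [stdChar_eq p x r k m h hr, stdChar_eq p y r' k' m' h' hr',
    stdChar_eq p (x + y) (r + r') (k + k') (m * p ^ k' + m' * p ^ k)
      (by push_cast; rw [← h, ← h']; ring) (by
        have : x + y - ((r + r' : ℚ) : ℚ_[p]) = (x - r) + (y - r') := by push_cast; ring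
        rw [this]
        exact (Padic.nonarchimedean _ _).trans (max_le hr hr')), ← Complex.exp_add]
  congr 1
  push_cast; ring

theorem stdChar_one (p : ℕ) [hp : Fact p.Prime] (x : ℚ_[p]) (hx : ‖x‖ ≤ 1) : stdChar p x = 1 := by
  rw [stdChar_eq p x 0 0 0 (by simp) (by simpa using hx)]
  simp

theorem stdChar_ne_zero (p : ℕ) [hp : Fact p.Prime] (x : ℚ_[p]) : stdChar p x ≠ 0 :=
  Complex.exp_ne_zero _

theorem stdChar_norm (p : ℕ) [hp : Fact p.Prime] (x : ℚ_[p]) : ‖stdChar p x‖ = 1 := by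
  unfold stdChar
  have : (2 * Real.pi * Complex.I * (padicFract p x : ℂ)) =
    ((2 * Real.pi * (padicFract p x : ℝ) : ℝ) : ℂ) * Complex.I := by push_cast; ring
  rw [this, Complex.norm_exp_ofReal_mul_I]

theorem stdChar_nsmul (p : ℕ) [hp : Fact p.Prime] (x : ℚ_[p]) (j : ℕ) :
    stdChar p (j * x) = stdChar p x ^ j := by
  induction j with
  | zero => simp [stdChar_one p 0 (by simp)]
  | succ j ih => rw [Nat.cast_succ, add_mul, one_mul, stdChar_add, ih, pow_succ]

theorem norm_le_one_of_stdChar (p : ℕ) [hp : Fact p.Prime] (x : ℚ_[p]) (hx : stdChar p x = 1) :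
    ‖x‖ ≤ 1 := by
  obtain ⟨r, -, -, ⟨k, m, h⟩, hr⟩ := padicFract_exists p x
  rw [stdChar_eq p x r k m h hr, Complex.exp_eq_one_iff] at hx
  obtain ⟨n, hn⟩ := hx
  have hpi : (2 * Real.pi * Complex.I : ℂ) ≠ 0 := Complex.two_pi_I_ne_zero
  have h1 : (r : ℂ) = n := by
    apply mul_left_cancel₀ hpi
    rw [hn]; ring
  have h2 : r = n := by exact_mod_cast h1
  have : x = (x - r) + ((n : ℤ) : ℚ_[p]) := by rw [h2]; push_cast; ring
  rw [this]
  exact (Padic.nonarchimedean _ _).trans (max_le hr (Padic.norm_int_le_one n))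

theorem stdChar_continuous (p : ℕ) [hp : Fact p.Prime] : Continuous (stdChar p) := by
  rw [Metric.continuous_iff]
  intro b ε hε
  refine ⟨1, one_pos, fun a ha => ?_⟩
  rw [dist_eq_norm] at ha
  have : stdChar p a = stdChar p b := by
    have : a = b + (a - b) := by ring
    rw [this, stdChar_add, stdChar_one p (a - b) ha.le, mul_one]
  rw [this, dist_self]
  exact hε

def padicBall (p : ℕ) [Fact p.Prime] (n : ℤ) : Set ℚ_[p] := {x | ‖x‖ ≤ (p : ℝ) ^ n}

section ball
variable (p : ℕ) [hp : Fact p.Prime] [MeasurableSpace ℚ_[p]] [BorelSpace ℚ_[p]]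
    (μ : Measure ℚ_[p]) [μ.IsAddHaarMeasure]

theorem padicBall_eq (n : ℤ) : padicBall p n = Metric.closedBall 0 ((p : ℝ) ^ n) := by
  ext x; simp [padicBall]

theorem padicBall_meas (n : ℤ) : MeasurableSet (padicBall p n) := by
  rw [padicBall_eq]; exact Metric.isClosed_closedBall.measurableSet

theorem padicBall_lt_top (n : ℤ) : μ (padicBall p n) < ⊤ := by
  rw [padicBall_eq]; exact (isCompact_closedBall _ _).measure_lt_top

theorem char_integrableOn (n : ℤ) (c : ℚ_[p]) :
    IntegrableOn (fun x => stdChar p (c * x)) (padicBall p n) μ := by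
  rw [padicBall_eq]
  exact ((stdChar_continuous p).comp (continuous_const.mul continuous_id)).continuousOn.integrableOn_compact
    (isCompact_closedBall _ _)

theorem ball_integral_small (n m : ℤ) (c : ℚ_[p]) (hc : ‖c‖ ≤ (p : ℝ) ^ m) (h : n + m ≤ 0) :
    ∫ x in padicBall p n, stdChar p (c * x) ∂μ = μ.real (padicBall p n) := by
  have hp1 : (1 : ℝ) < p := by exact_mod_cast hp.out.one_lt
  have : ∫ x in padicBall p n, stdChar p (c * x) ∂μ = ∫ x in padicBall p n, (1 : ℂ) ∂μ := by
    apply setIntegral_congr_fun (padicBall_meas p n)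
    intro x hx
    apply stdChar_one
    rw [norm_mul]
    calc ‖c‖ * ‖x‖ ≤ (p : ℝ) ^ m * (p : ℝ) ^ n :=
          mul_le_mul hc hx (norm_nonneg _) (by positivity)
      _ = (p : ℝ) ^ (n + m) := by rw [← zpow_add₀ (by positivity), add_comm]
      _ ≤ 1 := zpow_le_one_of_nonpos₀ hp1.le h
  rw [this]
  simp

theorem ball_integral_large (n m : ℤ) (c : ℚ_[p]) (hc : ‖c‖ = (p : ℝ) ^ m) (h : 0 < n + m) :
    ∫ x in padicBall p n, stdChar p (c * x) ∂μ = 0 := by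
  have hp1 : (1 : ℝ) < p := by exact_mod_cast hp.out.one_lt
  set y : ℚ_[p] := (p : ℚ_[p]) ^ (-n) with hy
  have hyn : ‖y‖ = (p : ℝ) ^ n := by rw [hy, Padic.norm_p_zpow, neg_neg]
  have hne : stdChar p (c * y) ≠ 1 := by
    intro h1
    have h2 := norm_le_one_of_stdChar p _ h1
    rw [norm_mul, hc, hyn, ← zpow_add₀ (by positivity), add_comm] at h2
    exact absurd (one_lt_zpow₀ hp1 h) (not_lt.mpr h2)
  have hmem : ∀ x, x + y ∈ padicBall p n ↔ x ∈ padicBall p n := by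
    intro x
    constructor
    · intro hx
      have : x = (x + y) + (-y) := by ring
      change ‖x‖ ≤ _
      rw [this]
      exact (Padic.nonarchimedean _ _).trans (max_le hx (by rw [norm_neg, hyn]))
    · intro hx
      exact (Padic.nonarchimedean _ _).trans (max_le hx hyn.le)
  have key : ∫ x in padicBall p n, stdChar p (c * x) ∂μ
      = stdChar p (c * y) * ∫ x in padicBall p n, stdChar p (c * x) ∂μ := by
    rw [← integral_indicator (padicBall_meas p n), ← integral_const_mul]
    conv_lhs => rw [← integral_add_right_eq_self _ y]
    congr 1
    ext x
    by_cases hx : x ∈ padicBall p n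
    · rw [Set.indicator_of_mem ((hmem x).2 hx), Set.indicator_of_mem hx, mul_add, stdChar_add,
        mul_comm]
    · rw [Set.indicator_of_notMem (fun h => hx ((hmem x).1 h)), Set.indicator_of_notMem hx, mul_zero]
  have : (stdChar p (c * y) - 1) * ∫ x in padicBall p n, stdChar p (c * x) ∂μ = 0 := by
    rw [sub_mul, ← key, one_mul, sub_self]
  exact (mul_eq_zero.mp this).resolve_left (sub_ne_zero.mpr hne)

theorem padicBall_subset (n m : ℤ) (h : n ≤ m) : padicBall p n ⊆ padicBall p m := by
  have hp1 : (1 : ℝ) < p := by exact_mod_cast hp.out.one_lt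
  intro x hx
  exact le_trans hx (zpow_le_zpow_right₀ hp1.le h)

theorem ball_succ (n : ℤ) : μ.real (padicBall p (n + 1)) = p * μ.real (padicBall p n) := by
  have hp1 : (1 : ℝ) < p := by exact_mod_cast hp.out.one_lt
  have hpp : (0 : ℝ) < p := by positivity
  have h1 : ∫ x in padicBall p (n + 1), ∑ j ∈ Finset.range p, stdChar p ((j * (p : ℚ_[p]) ^ n) * x) ∂μ
      = μ.real (padicBall p (n + 1)) := by
    rw [integral_finsetSum _ (fun j _ => char_integrableOn p μ (n + 1) _)]
    rw [Finset.sum_eq_single_of_mem 0 (Finset.mem_range.mpr hp.out.pos)]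
    · apply ball_integral_small p μ (n + 1) (-(n + 1)) _ _ (by simp)
      simp only [Nat.cast_zero, zero_mul, norm_zero]
      positivity
    · intro j hj hj0
      apply ball_integral_large p μ (n + 1) (-n) _ _ (by simp)
      have : ‖(j : ℚ_[p])‖ = 1 := by
        rw [Padic.norm_natCast_eq_one_iff]
        exact Nat.coprime_of_lt_prime hj0 (Finset.mem_range.mp hj) hp.out
      rw [norm_mul, this, one_mul, Padic.norm_p_zpow]
  have h2 : ∫ x in padicBall p (n + 1), ∑ j ∈ Finset.range p, stdChar p ((j * (p : ℚ_[p]) ^ n) * x) ∂μ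
      = p * μ.real (padicBall p n) := by
    have : ∫ x in padicBall p (n + 1), ∑ j ∈ Finset.range p, stdChar p ((j * (p : ℚ_[p]) ^ n) * x) ∂μ
      = ∫ x in padicBall p (n + 1), (padicBall p n).indicator (fun _ => (p : ℂ)) x ∂μ := by
      apply setIntegral_congr_fun (padicBall_meas p _)
      intro x hx
      have hx' : ‖x‖ ≤ (p : ℝ) ^ (n + 1) := hx
      simp only [mul_assoc, stdChar_nsmul]
      by_cases hxn : x ∈ padicBall p n
      · rw [Set.indicator_of_mem hxn, stdChar_one]
        · simp
        · rw [norm_mul, Padic.norm_p_zpow, zpow_neg, inv_mul_le_iff₀ (by positivity), mul_one]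
          exact hxn
      · rw [Set.indicator_of_notMem hxn]
        have hne : stdChar p ((p : ℚ_[p]) ^ n * x) ≠ 1 := by
          intro h
          have h := norm_le_one_of_stdChar p _ h
          rw [norm_mul, Padic.norm_p_zpow, zpow_neg, inv_mul_le_iff₀ (by positivity), mul_one] at h
          exact hxn h
        rw [geom_sum_eq hne, ← stdChar_nsmul, stdChar_one]
        · simp
        · rw [norm_mul, norm_mul, Padic.norm_p_zpow, Padic.norm_p]
          rw [zpow_add_one₀ hpp.ne'] at hx'
          rw [zpow_neg, inv_mul_le_iff₀ hpp, inv_mul_le_iff₀ (by positivity), mul_one]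
          exact hx'
    rw [this, setIntegral_indicator (padicBall_meas p n),
      Set.inter_eq_right.mpr (padicBall_subset p n (n + 1) (by simp))]
    simp [mul_comm]
  have := h1.symm.trans h2
  exact_mod_cast this

theorem ball_measure (hμ : μ {x : ℚ_[p] | ‖x‖ ≤ 1} = 1) (n : ℤ) :
    μ.real (padicBall p n) = (p : ℝ) ^ n := by
  have hpp : (p : ℝ) ≠ 0 := by exact_mod_cast hp.out.ne_zero
  induction n using Int.induction_on with
  | zero => simp [padicBall, Measure.real, hμ]
  | succ n ih => rw [ball_succ, ih, zpow_add_one₀ hpp, mul_comm]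
  | pred n ih =>
    have := ball_succ p μ (-(n : ℤ) - 1)
    rw [sub_add_cancel, ih] at this
    rw [zpow_sub_one₀ hpp, this]
    field_simp

theorem sphere_integral (n : ℤ) (c : ℚ_[p]) :
    ∫ x in {x : ℚ_[p] | ‖x‖ = (p : ℝ) ^ n}, stdChar p (c * x) ∂μ
      = ∫ x in padicBall p n, stdChar p (c * x) ∂μ
        - ∫ x in padicBall p (n - 1), stdChar p (c * x) ∂μ := by
  have : {x : ℚ_[p] | ‖x‖ = (p : ℝ) ^ n} = padicBall p n \ padicBall p (n - 1) := by
    ext x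
    simp only [padicBall, Set.mem_diff, Set.mem_setOf_eq,
      ← Padic.norm_lt_pow_iff_norm_le_pow_sub_one, not_lt]
    exact le_antisymm_iff
  rw [this, integral_diff (padicBall_meas p _) (char_integrableOn p μ n c)
    (padicBall_subset p _ _ (by simp))]

end ball

/-- For `ξ ≠ 0` and a radial function `f(|x|_p)` with `f(|x|_p)χ(ξx)` integrable,
`∫_{ℚ_p} f(|x|_p)χ(ξx) dx
  = (1-1/p)(1/|ξ|) ∑_{ν≥0} p^{-ν} f(1/(p^ν|ξ|)) - (1/|ξ|) f(p/|ξ|)`. -/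
theorem padic_radial_char_integral (p : ℕ) [Fact p.Prime]
    [MeasurableSpace ℚ_[p]] [BorelSpace ℚ_[p]]
    (μ : Measure ℚ_[p]) [μ.IsAddHaarMeasure]
    (hμ : μ {x : ℚ_[p] | ‖x‖ ≤ 1} = 1)
    (f : ℝ → ℂ) (ξ : ℚ_[p]) (hξ : ξ ≠ 0)
    (hint : Integrable (fun x : ℚ_[p] => f ‖x‖ * stdChar p (ξ * x)) μ) :
    ∫ x : ℚ_[p], f ‖x‖ * stdChar p (ξ * x) ∂μ
      = (1 - 1 / (p : ℂ)) * (1 / (‖ξ‖ : ℂ)) *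
          (∑' ν : ℕ, (p : ℂ) ^ (-(ν : ℤ)) * f (1 / ((p : ℝ) ^ ν * ‖ξ‖)))
        - (1 / (‖ξ‖ : ℂ)) * f ((p : ℝ) / ‖ξ‖) := by
  have hp : Fact p.Prime := inferInstance
  have hp1 : (1 : ℝ) < p := by exact_mod_cast hp.out.one_lt
  have hpp : (p : ℝ) ≠ 0 := by positivity
  have hpc : (p : ℂ) ≠ 0 := by exact_mod_cast hp.out.ne_zero
  obtain ⟨m, hm⟩ : ∃ m : ℤ, ‖ξ‖ = (p : ℝ) ^ m := ⟨_, Padic.norm_eq_zpow_neg_valuation hξ⟩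
  have hinj : Function.Injective (fun n : ℤ => (p : ℝ) ^ n) :=
    zpow_right_injective₀ (by positivity) hp1.ne'
  set S : ℤ → Set ℚ_[p] := fun n => {x | ‖x‖ = (p : ℝ) ^ n} with hS
  have hSm : ∀ n, MeasurableSet (S n) := fun n =>
    (isClosed_eq continuous_norm continuous_const).measurableSet
  have hSd : Pairwise (Function.onFun Disjoint S) := by
    intro i j hij
    refine Set.disjoint_left.mpr fun x hi hj => hij (hinj ?_)
    exact (Eq.symm hi).trans hj
  have hU : (⋃ n, S n) = {0}ᶜ := by
    ext x
    simp only [hS, Set.mem_iUnion, Set.mem_setOf_eq, Set.mem_compl_iff, Set.mem_singleton_iff]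
    constructor
    · rintro ⟨n, hn⟩ rfl
      rw [norm_zero] at hn
      exact (zpow_ne_zero n hpp) hn.symm
    · intro hx
      exact ⟨_, Padic.norm_eq_zpow_neg_valuation hx⟩
  have hμ0 : μ {(0 : ℚ_[p])} = 0 := measure_singleton 0
  have hsum := hasSum_integral_iUnion hSm hSd (hint.integrableOn (s := ⋃ n, S n))
  rw [hU, restrict_compl_singleton] at hsum
  have hterm : ∀ n, ∫ x in S n, f ‖x‖ * stdChar p (ξ * x) ∂μ
      = f ((p : ℝ) ^ n) * (∫ x in padicBall p n, stdChar p (ξ * x) ∂μ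
        - ∫ x in padicBall p (n - 1), stdChar p (ξ * x) ∂μ) := by
    intro n
    rw [← sphere_integral, ← integral_const_mul]
    apply setIntegral_congr_fun (hSm n)
    intro x hx
    have hx : ‖x‖ = (p : ℝ) ^ n := hx
    simp only [hx]
  simp_rw [hterm] at hsum
  have hg : Function.Injective (fun ν : ℕ => 1 - m - (ν : ℤ)) := by
    intro a b h
    simp only at h
    omega
  rw [← hg.hasSum_iff] at hsum
  swap
  · intro n hn
    have : 0 < n - 1 + m := by
      by_contra hc
      apply hn
      refine ⟨(1 - m - n).toNat, ?_⟩
      simp only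
      omega
    rw [ball_integral_large p μ n m ξ hm (by omega), ball_integral_large p μ (n - 1) m ξ hm this]
    simp
  have h0 := (hasSum_nat_add_iff' 1).mpr hsum
  have ht : ∀ ν : ℕ, ((fun n => f ((p : ℝ) ^ n) * (∫ x in padicBall p n, stdChar p (ξ * x) ∂μ
        - ∫ x in padicBall p (n - 1), stdChar p (ξ * x) ∂μ)) ∘ (fun ν : ℕ => 1 - m - (ν : ℤ))) (ν + 1)
      = (1 - 1 / (p : ℂ)) * (1 / (‖ξ‖ : ℂ)) *
        ((p : ℂ) ^ (-(ν : ℤ)) * f (1 / ((p : ℝ) ^ ν * ‖ξ‖))) := by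
    intro ν
    simp only [Function.comp]
    rw [ball_integral_small p μ _ m ξ hm.le (by push_cast; omega),
      ball_integral_small p μ _ m ξ hm.le (by push_cast; omega), ball_measure p μ hμ,
      ball_measure p μ hμ, hm]
    have e1 : (1 - m - ((ν + 1 : ℕ) : ℤ)) = -(ν : ℤ) - m := by push_cast; ring
    have e2 : 1 / ((p : ℝ) ^ ν * (p : ℝ) ^ m) = (p : ℝ) ^ (-(ν : ℤ) - m) := by
      rw [zpow_sub₀ hpp, zpow_neg, zpow_natCast]
      field_simp
    rw [e1, e2]
    push_cast
    rw [zpow_sub_one₀ hpc, zpow_sub₀ hpc]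
    field_simp
  simp_rw [ht] at h0
  have hf := h0.tsum_eq
  rw [tsum_mul_left] at hf
  rw [hf]
  simp only [Finset.sum_range_one, Function.comp, Nat.cast_zero, sub_zero]
  rw [ball_integral_large p μ (1 - m) m ξ hm (by omega),
    ball_integral_small p μ _ m ξ hm.le (by omega), ball_measure p μ hμ, hm]
  have e3 : (p : ℝ) / (p : ℝ) ^ m = (p : ℝ) ^ (1 - m) := by rw [zpow_sub₀ hpp, zpow_one]
  have e4 : 1 - m - 1 = -m := by ring
  rw [e3, e4]
  push_cast
  rw [zpow_neg]
  ring
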